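/- Let Ω ⊆ ℂⁿ be a bounded, convex, balanced domain and D ⊆ ℂⁿ a bounded domain. If the generalized squeezing function S_D^Ω satisfies S_D^Ω(z) = 1 at some point z ∈ D (witnessed by an extremal injective holomorphic map f : D → Ω with f(z) = 0 and Ω(S_D^Ω(z)) ⊆ f(D)), then f is a biholomorphism of D onto Ω. -/

import Mathlib

open Bornology

/-- The Minkowski function of a set `Ω` in a complex vector space. -/
noncomputable def mink {E : Type*} [SMul ℂ E] (Ω : Set E) (z : E) : ℝ :=
  sInf {t : ℝ | 0 < t ∧ (t : ℂ)⁻¹ • z ∈ Ω}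

/-- `Ω` is balanced: `λ • z ∈ Ω` whenever `z ∈ Ω` and `‖λ‖ ≤ 1`. -/
def Bal {E : Type*} [SMul ℂ E] (Ω : Set E) : Prop :=
  ∀ z ∈ Ω, ∀ l : ℂ, ‖l‖ ≤ 1 → l • z ∈ Ω

/-- The sublevel set `Ω(r) = {z : h_Ω(z) < r}`. -/
def sub' {E : Type*} [SMul ℂ E] (Ω : Set E) (r : ℝ) : Set E := {z | mink Ω z < r}

/-- The generalized squeezing function `S_D^Ω(z)` for bounded domains `D, Ω`. -/
noncomputable def gsq {E : Type*} [NormedAddCommGroup E] [NormedSpace ℂ E]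
    (D Ω : Set E) (z : E) : ℝ :=
  sSup {r : ℝ | ∃ f : E → E, DifferentiableOn ℂ f D ∧ Set.InjOn f D ∧
    Set.MapsTo f D Ω ∧ f z = 0 ∧ sub' Ω r ⊆ f '' D}

open Metric Set Filter Topology

theorem hol_fderiv_cont {E F : Type*} [NormedAddCommGroup E] [NormedSpace ℂ E] [FiniteDimensional ℂ E]
    [NormedAddCommGroup F] [NormedSpace ℂ F] {U : Set E} {f : E → F} (hU : IsOpen U)
    (hf : DifferentiableOn ℂ f U) : ContinuousOn (fderiv ℂ f) U := by
  have : ProperSpace E := FiniteDimensional.proper ℂ E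
  intro x0 hx0
  apply ContinuousAt.continuousWithinAt
  obtain ⟨R, hR, hRU⟩ := Metric.nhds_basis_closedBall.mem_iff.1 (hU.mem_nhds hx0)
  have hc : IsCompact (closedBall x0 R) := isCompact_closedBall x0 R
  have huc := hc.uniformContinuousOn_of_continuous (hf.continuousOn.mono hRU)
  rw [Metric.continuousAt_iff]
  intro ε hε
  rw [Metric.uniformContinuousOn_iff] at huc
  obtain ⟨δ, hδ, huc⟩ := huc (ε * R / 8) (by positivity)
  refine ⟨min δ (R / 2), by positivity, fun x hx => ?_⟩
  have hxδ : dist x x0 < δ := hx.trans_le (min_le_left _ _)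
  have hxR : dist x x0 < R / 2 := hx.trans_le (min_le_right _ _)
  rw [dist_eq_norm] at hxδ hxR
  have hdU : ∀ y ∈ closedBall x0 R, DifferentiableAt ℂ f y := fun y hy =>
    hf.differentiableAt (hU.mem_nhds (hRU hy))
  have hmem : ∀ y ∈ ball x0 (R / 2), y ∈ closedBall x0 R ∧ y + (x - x0) ∈ closedBall x0 R := by
    intro y hy
    rw [mem_ball, dist_eq_norm] at hy
    refine ⟨by rw [mem_closedBall, dist_eq_norm]; linarith, ?_⟩
    rw [mem_closedBall, dist_eq_norm]
    have : y + (x - x0) - x0 = (y - x0) + (x - x0) := by abel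
    rw [this]
    linarith [norm_add_le (y - x0) (x - x0)]
  set g : E → F := fun y => f (y + (x - x0)) - f y with hg
  have hgd : ∀ y ∈ ball x0 (R / 2), DifferentiableAt ℂ g y := by
    intro y hy
    obtain ⟨h1, h2⟩ := hmem y hy
    exact ((hdU _ h2).comp y (differentiableAt_id.add_const _)).sub (hdU _ h1)
  have hgb : ∀ y ∈ ball x0 (R / 2), ‖g y‖ < ε * R / 8 := by
    intro y hy
    obtain ⟨h1, h2⟩ := hmem y hy
    have := huc _ h2 _ h1 (by rw [dist_eq_norm]; simpa using hxδ)
    rwa [dist_eq_norm] at this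
  have h0 : x0 ∈ ball x0 (R / 2) := mem_ball_self (by positivity)
  have key := Complex.norm_fderiv_le_div_of_mapsTo_ball (f := g) (c := x0) (R₁ := R / 2)
    (R₂ := ε * R / 4) (fun y hy => (hgd y hy).differentiableWithinAt) (by
      intro y hy
      rw [mem_closedBall, dist_eq_norm]
      have := norm_sub_le (g y) (g x0)
      linarith [hgb y hy, hgb x0 h0]) (by positivity)
  have hfd : fderiv ℂ g x0 = fderiv ℂ f x - fderiv ℂ f x0 := by
    obtain ⟨h1, h2⟩ := hmem x0 h0
    have e1 : fderiv ℂ (fun y => f (y + (x - x0))) x0 = fderiv ℂ f x := by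
      rw [fderiv_comp_add_right]; congr 1; abel
    rw [hg, fderiv_fun_sub, e1]
    · exact ((hdU _ h2).comp x0 (differentiableAt_id.add_const _))
    · exact hdU _ h1
  rw [dist_eq_norm, ← hfd]
  refine key.trans_lt ?_
  rw [div_lt_iff₀ (by positivity)]
  nlinarith [mul_pos hε hR]


theorem hol_contDiffAt {E F : Type*} [NormedAddCommGroup E] [NormedSpace ℂ E] [FiniteDimensional ℂ E]
    [NormedAddCommGroup F] [NormedSpace ℂ F] {U : Set E} {f : E → F} (hU : IsOpen U)
    (hf : DifferentiableOn ℂ f U) {a : E} (ha : a ∈ U) : ContDiffAt ℂ 1 f a := by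
  have : ContDiffOn ℂ ((0 : ℕ) + 1) f U := by
    rw [contDiffOn_succ_iff_fderiv_of_isOpen hU]
    refine ⟨hf, by simp, ?_⟩
    simpa using (contDiffOn_zero (𝕜 := ℂ)).2 (hol_fderiv_cont hU hf)
  simpa using this.contDiffAt (hU.mem_nhds ha)

theorem hol_dir {E F : Type*} [NormedAddCommGroup E] [NormedSpace ℂ E] [FiniteDimensional ℂ E]
    [NormedAddCommGroup F] [NormedSpace ℂ F] [CompleteSpace F] {U : Set E} {f : E → F}
    (hU : IsOpen U) (hf : DifferentiableOn ℂ f U) (v : E) :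
    DifferentiableOn ℂ (fun x => fderiv ℂ f x v) U := by
  have : ProperSpace E := FiniteDimensional.proper ℂ E
  intro x0 hx0
  apply DifferentiableAt.differentiableWithinAt
  obtain ⟨R, hR, hRU⟩ := Metric.nhds_basis_closedBall.mem_iff.1 (hU.mem_nhds hx0)
  have hcont := (hol_fderiv_cont hU hf).mono hRU
  obtain ⟨C, hC⟩ := (isCompact_closedBall x0 R).exists_bound_of_continuousOn hcont
  have hdU : ∀ y ∈ closedBall x0 R, DifferentiableAt ℂ f y := fun y hy =>
    hf.differentiableAt (hU.mem_nhds (hRU hy))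
  set r : ℝ := R / 2 / (‖v‖ + 1) with hr
  have hr0 : 0 < r := by positivity
  have hrv : r * ‖v‖ < R / 2 := by
    rw [hr, div_mul_eq_mul_div, div_lt_iff₀ (by positivity)]
    nlinarith
  have hmem : ∀ x ∈ ball x0 (R / 2), ∀ t : ℂ, ‖t‖ ≤ r → x + t • v ∈ closedBall x0 R := by
    intro x hx t ht
    rw [mem_ball, dist_eq_norm] at hx
    rw [mem_closedBall, dist_eq_norm]
    have e : x + t • v - x0 = (x - x0) + t • v := by abel
    have h2 : ‖t • v‖ ≤ r * ‖v‖ := by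
      rw [norm_smul]; gcongr
    rw [e]
    linarith [norm_add_le (x - x0) (t • v)]
  have hcm : ∀ θ : ℝ, ‖circleMap 0 r θ‖ ≤ r := by
    intro θ; simp [abs_of_pos hr0]
  let c : ℝ → ℂ := fun θ => deriv (circleMap 0 r) θ * ((circleMap 0 r θ - 0) ^ 2)⁻¹
  have hcc : Continuous c := by
    have h1 : Continuous (deriv (circleMap 0 r)) := by
      have : deriv (circleMap 0 r) = fun θ => circleMap 0 r θ * Complex.I := by
        ext θ; simp [deriv_circleMap]
      rw [this]; fun_prop
    refine h1.mul (Continuous.inv₀ (by fun_prop) ?_)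
    intro θ
    simp [circleMap_eq_center_iff, hr0.ne']
  have hform : ∀ x ∈ ball x0 (R / 2), fderiv ℂ f x v = (2 * ↑Real.pi * Complex.I)⁻¹ •
      ∫ θ in (0 : ℝ)..2 * Real.pi, c θ • f (x + circleMap 0 r θ • v) := by
    intro x hx
    have hx' : x ∈ closedBall x0 R := by simpa using hmem x hx 0 (by simpa using hr0.le)
    have hline : ∀ t : ℂ, HasDerivAt (fun t : ℂ => x + t • v) v t := by
      intro t
      simpa using ((hasDerivAt_id t).smul_const v).const_add x
    have hO : IsOpen ((fun t : ℂ => x + t • v) ⁻¹' U) := hU.preimage (by fun_prop)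
    have := Complex.two_pi_I_inv_smul_circleIntegral_sub_sq_inv_smul_of_differentiable
      (f := fun t : ℂ => f (x + t • v)) (c := 0) (w₀ := 0) (R := r) hO ?_ ?_ (by simpa using hr0)
    · have hd : deriv (fun t : ℂ => f (x + t • v)) 0 = fderiv ℂ f x v := by
        have h1 : HasFDerivAt f (fderiv ℂ f x) (x + (0 : ℂ) • v) := by
          simpa using (hdU x hx').hasFDerivAt
        exact (h1.comp_hasDerivAt (0 : ℂ) (hline 0)).deriv
      rw [← hd, ← this, circleIntegral]
      congr 2
      ext θ
      simp only [c, smul_smul]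
    · intro t ht
      exact hRU (hmem x hx t (by simpa using ht))
    · intro t ht
      exact ((hf.differentiableAt (hU.mem_nhds ht)).comp t
        (hline t).differentiableAt).differentiableWithinAt
  have hb : ball x0 (R / 2) ∈ 𝓝 x0 := ball_mem_nhds _ (by positivity)
  have hpath : ∀ x, Continuous fun θ : ℝ => x + circleMap 0 r θ • v := by intro x; fun_prop
  have hFc : ∀ x ∈ ball x0 (R / 2), Continuous fun θ : ℝ => c θ • f (x + circleMap 0 r θ • v) := by
    intro x hx
    refine hcc.smul ?_
    exact (hf.continuousOn.mono hRU).comp_continuous (hpath x) fun θ => hmem x hx _ (hcm θ)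
  have hF'c : ∀ x ∈ ball x0 (R / 2),
      Continuous fun θ : ℝ => c θ • fderiv ℂ f (x + circleMap 0 r θ • v) := by
    intro x hx
    refine hcc.smul ?_
    exact hcont.comp_continuous (hpath x) fun θ => hmem x hx _ (hcm θ)
  have hx00 : x0 ∈ ball x0 (R / 2) := mem_of_mem_nhds hb
  have key := intervalIntegral.hasFDerivAt_integral_of_dominated_of_fderiv_le (𝕜 := ℂ)
    (μ := MeasureTheory.volume) (a := 0) (b := 2 * Real.pi)
    (F := fun x θ => c θ • f (x + circleMap 0 r θ • v))
    (F' := fun x θ => c θ • fderiv ℂ f (x + circleMap 0 r θ • v))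
    (bound := fun θ => ‖c θ‖ * C) hb
    (by filter_upwards [hb] with x hx using (hFc x hx).aestronglyMeasurable)
    ((hFc x0 hx00).intervalIntegrable _ _)
    (hF'c x0 hx00).aestronglyMeasurable
    (by
      refine Eventually.of_forall fun θ _ x hx => ?_
      rw [norm_smul]
      gcongr
      exact hC _ (hmem x hx _ (hcm θ)))
    ((hcc.norm.mul continuous_const).intervalIntegrable _ _)
    (by
      refine Eventually.of_forall fun θ _ x hx => ?_
      refine HasFDerivAt.const_smul ?_ (c θ)
      have h1 := (hdU _ (hmem x hx _ (hcm θ))).hasFDerivAt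
      exact (hasFDerivAt_comp_add_right _).2 h1)
  refine ((key.differentiableAt.const_smul (2 * ↑Real.pi * Complex.I)⁻¹).congr_of_eventuallyEq ?_)
  filter_upwards [hb] with x hx using hform x hx

theorem one_var {V : Set ℂ} {g : ℂ → ℂ} (hV : IsOpen V) (hg : DifferentiableOn ℂ g V)
    (hi : InjOn g V) {a : ℂ} (ha : a ∈ V) : deriv g a ≠ 0 := by
  intro hd
  have hVn := hV.mem_nhds ha
  have han : AnalyticAt ℂ g a := hg.analyticAt hVn
  have han1 : AnalyticAt ℂ (fun z => g z - g a) a := han.sub analyticAt_const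
  have hfin : analyticOrderAt (fun z => g z - g a) a ≠ ⊤ := by
    intro h
    rw [analyticOrderAt_eq_top] at h
    have h2 : ∀ᶠ z in 𝓝[≠] a, False := by
      filter_upwards [h.filter_mono nhdsWithin_le_nhds, nhdsWithin_le_nhds hVn,
        self_mem_nhdsWithin] with z hz hzV hne
      exact hne (hi hzV ha (sub_eq_zero.1 hz))
    obtain ⟨z, hz⟩ := h2.exists
    exact hz
  obtain ⟨m, hm⟩ := ENat.ne_top_iff_exists.1 hfin
  obtain ⟨G, hG, hG0, hGe⟩ := (han1.analyticOrderAt_eq_natCast (n := m)).1 hm.symm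
  have hm2 : 2 ≤ m := by
    by_contra hlt
    have hlt : m = 0 ∨ m = 1 := by omega
    rcases hlt with rfl | rfl
    · have := hGe.self_of_nhds
      simp at this
      exact hG0 this.symm
    · have h1 : HasDerivAt (fun z => g z - g a) 0 a := by
        simpa [hd] using han.differentiableAt.hasDerivAt.sub_const (g a)
      have h2 : HasDerivAt (fun z => (z - a) ^ 1 • G z) (G a) a := by
        have := ((hasDerivAt_id a).sub_const a).mul hG.differentiableAt.hasDerivAt
        simpa [Pi.mul_def] using this
      have h3 := h2.congr_of_eventuallyEq hGe
      exact hG0 (h3.unique h1)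
  set φ : ℂ → ℂ := fun z => (z - a) * Complex.exp (Complex.log (G z / G a) / m) with hφ
  have hquo : AnalyticAt ℂ (fun z => G z / G a) a := hG.div analyticAt_const hG0
  have hexp : AnalyticAt ℂ (fun z => Complex.exp (Complex.log (G z / G a) / m)) a := by
    refine AnalyticAt.cexp ?_
    refine AnalyticAt.div (hquo.clog ?_) analyticAt_const (by norm_cast; omega)
    simp [hG0]
  have hφan : AnalyticAt ℂ φ a := (analyticAt_id.sub analyticAt_const).mul hexp
  have hφd : HasStrictDerivAt φ 1 a := by
    have h1 := hφan.hasStrictDerivAt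
    have h2 : HasDerivAt φ 1 a := by
      have := ((hasDerivAt_id a).sub_const a).mul hexp.differentiableAt.hasDerivAt
      simpa [Pi.mul_def, hG0, hφ] using this
    rwa [h2.deriv] at h1
  have hmap := hφd.map_nhds_eq one_ne_zero
  have hφa : φ a = 0 := by simp [hφ]
  have hGne : ∀ᶠ z in 𝓝 a, G z ≠ 0 := hG.continuousAt.eventually_ne hG0
  have hpow : ∀ᶠ z in 𝓝 a, z ∈ V ∧ φ z ^ m * G a = g z - g a := by
    filter_upwards [hGe, hGne, hVn] with z h1 h2 h3
    refine ⟨h3, ?_⟩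
    rw [h1, hφ]
    have hm0 : (m : ℂ) ≠ 0 := by norm_cast; omega
    simp only [mul_pow, smul_eq_mul]
    rw [← Complex.exp_nat_mul, mul_div_cancel₀ _ hm0, Complex.exp_log (div_ne_zero h2 hG0)]
    field_simp
  have himg : φ '' {z | z ∈ V ∧ φ z ^ m * G a = g z - g a} ∈ 𝓝 (0 : ℂ) := by
    rw [← hφa, ← hmap]; exact image_mem_map hpow
  obtain ⟨ε, hε, hball⟩ := Metric.mem_nhds_iff.1 himg
  have hω := Complex.isPrimitiveRoot_exp m (by omega)
  set ω := Complex.exp (2 * Real.pi * Complex.I / m) with hωd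
  have hωn : ‖ω‖ = 1 := hω.norm'_eq_one (by omega)
  have hε2 : ‖((ε / 2 : ℝ) : ℂ)‖ < ε := by
    rw [Complex.norm_real, Real.norm_eq_abs, abs_of_pos (by positivity)]; linarith
  obtain ⟨z1, ⟨hz1, hz1'⟩, e1⟩ := hball (a := ((ε / 2 : ℝ) : ℂ)) (by
    rw [mem_ball_zero_iff]; exact hε2)
  obtain ⟨z2, ⟨hz2, hz2'⟩, e2⟩ := hball (a := ω * ((ε / 2 : ℝ) : ℂ)) (by
    rw [mem_ball_zero_iff, norm_mul, hωn, one_mul]; exact hε2)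
  have : g z1 = g z2 := by
    have : g z1 - g a = g z2 - g a := by
      rw [← hz1', ← hz2', e1, e2, mul_pow, hω.pow_eq_one, one_mul]
    simpa using this
  have hzz := hi hz1 hz2 this
  subst hzz
  rw [e1] at e2
  have hne : ((ε / 2 : ℝ) : ℂ) ≠ 0 := by
    rw [Complex.ofReal_ne_zero]; positivity
  have : ω = 1 := by
    have : (1 - ω) * ((ε / 2 : ℝ) : ℂ) = 0 := by linear_combination e2
    rcases mul_eq_zero.1 this with h | h
    · linear_combination -h
    · exact absurd h hne
  exact hω.ne_one (by omega) this

theorem max_lem {K : Type*} [TopologicalSpace K] {w0 : K} {H : ℂ × K → ℂ}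
    (hH : ∀ᶠ p in 𝓝 ((0 : ℂ), w0), ContinuousAt H p ∧
      DifferentiableAt ℂ (fun ζ => H (ζ, p.2)) p.1 ∧ (H p = 0 → p.1 = 0))
    (h0 : H (0, w0) = 0) : ∀ᶠ w in 𝓝 w0, H (0, w) = 0 := by
  rw [nhds_prod_eq, eventually_prod_iff] at hH
  obtain ⟨P, hP, Q, hQ, hPQ⟩ := hH
  obtain ⟨r, hr, hrP⟩ := Metric.nhds_basis_closedBall.mem_iff.1 hP
  have hQ0 : Q w0 := hQ.self_of_nhds
  have hsc : IsCompact (sphere (0 : ℂ) r) := isCompact_sphere 0 r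
  have hsub : sphere (0 : ℂ) r ⊆ closedBall 0 r := sphere_subset_closedBall
  have hcw : ContinuousOn (fun ζ => ‖H (ζ, w0)‖) (sphere (0 : ℂ) r) := by
    intro ζ hζ
    have := (hPQ (hrP (hsub hζ)) hQ0).2.1.continuousAt
    exact this.norm.continuousWithinAt
  obtain ⟨ζ0, hζ0, hmin⟩ := hsc.exists_isMinOn (NormedSpace.sphere_nonempty.2 hr.le) hcw
  set δ := ‖H (ζ0, w0)‖ with hδ
  have hδ0 : 0 < δ := by
    rw [hδ, norm_pos_iff]
    intro h
    have := (hPQ (hrP (hsub hζ0)) hQ0).2.2 h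
    simp only at this
    rw [this] at hζ0
    simp at hζ0
    exact hr.ne hζ0
  have hev : ∀ᶠ w in 𝓝 w0, ∀ ζ ∈ sphere (0 : ℂ) r, δ / 2 < ‖H (ζ, w)‖ := by
    have := hsc.eventually_forall_of_forall_eventually (x₀ := w0)
      (P := fun w ζ => δ / 2 < ‖H (ζ, w)‖) ?_
    · exact this
    · intro ζ hζ
      have hc := (hPQ (hrP (hsub hζ)) hQ0).1
      have hlt : δ / 2 < ‖H (ζ, w0)‖ := lt_of_lt_of_le (by linarith) (hmin hζ)
      have h1 : ContinuousAt (fun p : K × ℂ => ‖H (p.2, p.1)‖) (w0, ζ) := by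
        have : ContinuousAt (fun p : K × ℂ => H (p.2, p.1)) (w0, ζ) :=
          ContinuousAt.comp (f := fun p : K × ℂ => (p.2, p.1)) (g := H) hc (by fun_prop)
        exact this.norm
      exact h1.eventually (lt_mem_nhds hlt)
  have hev0 : ∀ᶠ w in 𝓝 w0, ‖H (0, w)‖ < δ / 2 := by
    have hc := (hPQ (hrP (mem_closedBall_self hr.le)) hQ0).1
    have h1 : ContinuousAt (fun w : K => ‖H (0, w)‖) w0 :=
      (ContinuousAt.comp (f := fun w : K => ((0 : ℂ), w)) (g := H) hc (by fun_prop)).norm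
    exact h1.eventually (gt_mem_nhds (by simpa [h0] using hδ0))
  filter_upwards [hev, hev0, hQ] with w h1 h2 h3
  by_contra hne
  have hnz : ∀ ζ ∈ closedBall (0 : ℂ) r, H (ζ, w) ≠ 0 := by
    intro ζ hζ h
    have := (hPQ (hrP hζ) h3).2.2 h
    simp only at this
    subst this
    exact hne h
  have hdc : DiffContOnCl ℂ (fun ζ => (H (ζ, w))⁻¹) (ball 0 r) := by
    apply DifferentiableOn.diffContOnCl
    rw [closure_ball _ hr.ne']
    intro ζ hζ
    exact ((hPQ (hrP hζ) h3).2.1.inv (hnz ζ hζ)).differentiableWithinAt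
  have := Complex.norm_le_of_forall_mem_frontier_norm_le isBounded_ball hdc (C := 2 / δ) (by
    intro ζ hζ
    rw [frontier_ball _ hr.ne'] at hζ
    rw [norm_inv, inv_le_comm₀ (by linarith [h1 ζ hζ]) (by positivity)]
    rw [inv_div]
    exact (h1 ζ hζ).le) (subset_closure (mem_ball_self hr))
  rw [norm_inv, inv_le_comm₀ (norm_pos_iff.2 hne) (by positivity), inv_div] at this
  linarith

theorem straighten {E : Type*} [NormedAddCommGroup E] [NormedSpace ℂ E] [FiniteDimensional ℂ E]
    {φ : E → ℂ} {a : E} {φ' : E →L[ℂ] ℂ} (hφ : ContDiffAt ℂ 1 φ a) (hφ' : HasFDerivAt φ φ' a)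
    (h0 : φ' ≠ 0) :
    ∃ (Ψ : ℂ × φ'.ker → E) (L : E → φ'.ker), ContDiffAt ℂ 1 Ψ (φ a, 0) ∧ Ψ (φ a, 0) = a ∧
      (∀ᶠ p in 𝓝 (φ a, (0 : φ'.ker)), φ (Ψ p) = p.1 ∧ L (Ψ p) = p.2) ∧
      HasFDerivAt (fun w : φ'.ker => Ψ (φ a, w)) φ'.ker.subtypeL 0 := by
  have : CompleteSpace E := FiniteDimensional.complete ℂ E
  obtain ⟨P, hP⟩ := Submodule.ClosedComplemented.of_finiteDimensional φ'.ker
  have hsurj : Function.Surjective φ' := by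
    obtain ⟨u, hu⟩ : ∃ u, φ' u ≠ 0 := by
      by_contra! h; exact h0 (ContinuousLinearMap.ext h)
    intro c
    exact ⟨(c / φ' u) • u, by simp [hu]⟩
  let A : E →L[ℂ] ℂ × φ'.ker := φ'.prod P
  have hAinj : Function.Injective A := by
    rw [injective_iff_map_eq_zero]
    intro x hx
    have h1 : φ' x = 0 := congrArg Prod.fst hx
    have h2 : P x = 0 := congrArg Prod.snd hx
    have h3 := hP ⟨x, h1⟩
    rw [h2] at h3
    exact (congrArg Subtype.val h3).symm
  have hAsurj : Function.Surjective A := by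
    rintro ⟨c, w⟩
    obtain ⟨u, hu⟩ := hsurj c
    refine ⟨u + ((w - P u : φ'.ker) : E), ?_⟩
    have hk : ∀ q : φ'.ker, φ' (q : E) = 0 := fun q => q.2
    refine Prod.ext ?_ ?_
    · change φ' _ = c
      rw [map_add, hk, hu, add_zero]
    · change P _ = w
      rw [map_add, hP]; abel
  let e : E ≃L[ℂ] ℂ × φ'.ker :=
    (LinearEquiv.ofBijective (A : E →ₗ[ℂ] ℂ × φ'.ker) ⟨hAinj, hAsurj⟩).toContinuousLinearEquiv
  have heA : (e : E →L[ℂ] ℂ × φ'.ker) = A := by ext x <;> rfl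
  let Φ : E → ℂ × φ'.ker := fun x => (φ x, P (x - a))
  have hPd : HasFDerivAt (fun x => P (x - a)) P a :=
    P.hasFDerivAt.comp a ((hasFDerivAt_id a).sub_const a)
  have hΦd : HasFDerivAt Φ (e : E →L[ℂ] ℂ × φ'.ker) a := by
    rw [heA]; exact hφ'.prodMk hPd
  have hΦc : ContDiffAt ℂ 1 Φ a := by
    refine hφ.prodMk ?_
    exact (P.contDiff.comp (contDiff_id.sub contDiff_const)).contDiffAt
  have hΦa : Φ a = (φ a, 0) := by simp [Φ]
  have hst := hΦc.hasStrictFDerivAt' hΦd one_ne_zero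
  refine ⟨hΦc.localInverse hΦd one_ne_zero, fun x => P (x - a), ?_, ?_, ?_, ?_⟩
  · rw [← hΦa]; exact hΦc.to_localInverse hΦd one_ne_zero
  · rw [← hΦa]; exact hΦc.localInverse_apply_image hΦd one_ne_zero
  · have := hst.eventually_right_inverse
    rw [hΦa] at this
    filter_upwards [this] with p hp
    exact ⟨congrArg Prod.fst hp, congrArg Prod.snd hp⟩
  · have h1 := hst.to_localInverse.hasFDerivAt
    rw [hΦa] at h1
    have h2 : HasFDerivAt (fun w : φ'.ker => (φ a, w)) (ContinuousLinearMap.inr ℂ ℂ φ'.ker) 0 :=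
      hasFDerivAt_prodMk_right _ _
    have h3 := HasFDerivAt.comp (0 : φ'.ker) h1 h2
    have heq : (e.symm : ℂ × φ'.ker →L[ℂ] E).comp (ContinuousLinearMap.inr ℂ ℂ φ'.ker) =
        φ'.ker.subtypeL := by
      ext w
      have : e (w : E) = (0, w) := by
        change A (w : E) = _
        exact Prod.ext w.2 (hP w)
      change e.symm (0, w) = (w : E)
      rw [← this, e.symm_apply_apply]
    rw [heq] at h3
    exact h3

/-- iterated directional derivatives -/
noncomputable def dd {E : Type*} [NormedAddCommGroup E] [NormedSpace ℂ E] (h : E → ℂ) :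
    List E → E → ℂ
  | [] => h
  | v :: l => fun x => fderiv ℂ (dd h l) x v

theorem dd_hol {E : Type*} [NormedAddCommGroup E] [NormedSpace ℂ E] [FiniteDimensional ℂ E]
    {h : E → ℂ} {U : Set E} (hU : IsOpen U) (hh : DifferentiableOn ℂ h U) (l : List E) :
    DifferentiableOn ℂ (dd h l) U := by
  induction l with
  | nil => exact hh
  | cons v l ih => exact hol_dir hU ih v

theorem dd_zero {E : Type*} [NormedAddCommGroup E] [NormedSpace ℂ E] [FiniteDimensional ℂ E]
    {h : E → ℂ} {U : Set E} (hU : IsOpen U) (hh : DifferentiableOn ℂ h U) {p : E} (hp : p ∈ U)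
    (hz : ∀ l, dd h l p = 0) : ∀ᶠ x in 𝓝 p, h x = 0 := by
  obtain ⟨r, hr, hrU⟩ := Metric.mem_nhds_iff.1 (hU.mem_nhds hp)
  filter_upwards [ball_mem_nhds p (half_pos hr)] with x hx
  set v := x - p with hv
  have hvn : ‖v‖ < r / 2 := by rwa [mem_ball, dist_eq_norm] at hx
  have hmem : ∀ t ∈ ball (0 : ℂ) 2, p + t • v ∈ U := by
    intro t ht
    apply hrU
    rw [mem_ball_zero_iff] at ht
    rw [mem_ball, dist_eq_norm, add_sub_cancel_left, norm_smul]
    nlinarith [norm_nonneg t, norm_nonneg v]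
  have hline : ∀ t : ℂ, HasDerivAt (fun t : ℂ => p + t • v) v t := by
    intro t
    simpa using ((hasDerivAt_id t).smul_const v).const_add p
  have hder : ∀ l, ∀ t ∈ ball (0 : ℂ) 2,
      HasDerivAt (fun t : ℂ => dd h l (p + t • v)) (dd h (v :: l) (p + t • v)) t := by
    intro l t ht
    have := ((dd_hol hU hh l).differentiableAt (hU.mem_nhds (hmem t ht))).hasFDerivAt
    exact this.comp_hasDerivAt t (hline t)
  have hit : ∀ m : ℕ, ∀ t ∈ ball (0 : ℂ) 2,
      iteratedDeriv m (fun t : ℂ => h (p + t • v)) t = dd h (List.replicate m v) (p + t • v) := by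
    intro m
    induction m with
    | zero => intro t ht; simp [dd]
    | succ m ih =>
      intro t ht
      rw [iteratedDeriv_succ]
      have : iteratedDeriv m (fun t : ℂ => h (p + t • v)) =ᶠ[𝓝 t]
          fun t => dd h (List.replicate m v) (p + t • v) := by
        filter_upwards [isOpen_ball.mem_nhds ht] with s hs using ih s hs
      rw [this.deriv_eq, (hder _ t ht).deriv]
      rfl
  have hd : DifferentiableOn ℂ (fun t : ℂ => h (p + t • v)) (ball 0 2) := fun t ht =>
    (hder [] t ht).differentiableAt.differentiableWithinAt
  have h1 := Complex.taylorSeries_eq_on_ball hd (z := 1) (by simp)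
  have h2 : ∀ m : ℕ, iteratedDeriv m (fun t : ℂ => h (p + t • v)) 0 = 0 := by
    intro m
    rw [hit m 0 (by simp)]
    simpa using hz _
  simp only [h2] at h1
  simpa [hv] using h1.symm

theorem osgood_one {E F : Type*} [NormedAddCommGroup E] [NormedSpace ℂ E] [FiniteDimensional ℂ E]
    [NormedAddCommGroup F] [NormedSpace ℂ F] [FiniteDimensional ℂ F]
    (hE : Module.finrank ℂ E = 1) (hF : Module.finrank ℂ F = 1) {U : Set E} {f : E → F}
    (hU : IsOpen U) (hf : DifferentiableOn ℂ f U) (hi : InjOn f U) {a : E} (ha : a ∈ U) :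
    fderiv ℂ f a ≠ 0 := by
  intro hd
  let e1 : ℂ ≃L[ℂ] E := ContinuousLinearEquiv.ofFinrankEq (by simp [hE])
  let e2 : F ≃L[ℂ] ℂ := ContinuousLinearEquiv.ofFinrankEq (by simp [hF])
  have hV : IsOpen (e1 ⁻¹' U) := hU.preimage e1.continuous
  have hda : ∀ t ∈ e1 ⁻¹' U, HasFDerivAt (fun t => e2 (f (e1 t)))
      ((e2 : F →L[ℂ] ℂ).comp ((fderiv ℂ f (e1 t)).comp (e1 : ℂ →L[ℂ] E))) t := by
    intro t ht
    have := (hf.differentiableAt (hU.mem_nhds ht)).hasFDerivAt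
    exact e2.hasFDerivAt.comp t (this.comp t e1.hasFDerivAt)
  refine one_var hV (g := fun t => e2 (f (e1 t)))
    (fun t ht => (hda t ht).differentiableAt.differentiableWithinAt) ?_ (a := e1.symm a)
    (by simpa using ha) ?_
  · intro s hs t ht hst
    exact e1.injective (hi hs ht (e2.injective hst))
  · rw [(hda (e1.symm a) (by simpa using ha)).hasDerivAt.deriv]
    simp [hd]

theorem diffOn_prod {E ι : Type*} [NormedAddCommGroup E] [NormedSpace ℂ E] {U : Set E}
    {g : ι → E → ℂ} (s : Finset ι) (hg : ∀ i, DifferentiableOn ℂ (g i) U) :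
    DifferentiableOn ℂ (fun x => ∏ i ∈ s, g i x) U := by
  classical
  induction s using Finset.induction_on with
  | empty => simp
  | insert a s ha ih =>
    simp only [Finset.prod_insert ha]
    exact (hg a).fun_mul ih

theorem zset {E F : Type*} [NormedAddCommGroup E] [NormedSpace ℂ E] [FiniteDimensional ℂ E]
    [NormedAddCommGroup F] [NormedSpace ℂ F] (hE : 2 ≤ Module.finrank ℂ E) {U : Set E} {f : E → F}
    (hU : IsOpen U) (hf : DifferentiableOn ℂ f U) (hi : InjOn f U) {h : E → ℂ}
    (hh : DifferentiableOn ℂ h U) (hz : ∀ x ∈ U, h x = 0 ↔ fderiv ℂ f x = 0)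
    {a : E} (ha : a ∈ U) : fderiv ℂ f a ≠ 0 := by
  intro hfa
  have hha : h a = 0 := (hz a ha).2 hfa
  have hnt : Nontrivial E := Module.nontrivial_of_finrank_pos (R := ℂ) (by omega)
  -- some derivative of `h` is nonzero at `a`
  have hex : ∃ m : ℕ, ∃ l : List E, l.length = m ∧ ∃ p ∈ U, h p = 0 ∧ dd h l p ≠ 0 := by
    by_contra! hno
    have hev := dd_zero hU hh ha (fun l => hno _ l rfl a ha hha)
    obtain ⟨r, hr, hball⟩ := Metric.mem_nhds_iff.1 (hev.and (hU.mem_nhds ha))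
    obtain ⟨y, hy, hya⟩ : ∃ y ∈ ball a r, y ≠ a := by
      obtain ⟨u, hu⟩ := exists_ne (0 : E)
      have hu' : 0 < ‖u‖ := norm_pos_iff.2 hu
      refine ⟨a + ((r / 2 / ‖u‖ : ℝ) : ℂ) • u, ?_, ?_⟩
      · rw [mem_ball, dist_eq_norm, add_sub_cancel_left, norm_smul, Complex.norm_real,
          Real.norm_eq_abs, abs_of_pos (by positivity), div_mul_cancel₀ _ hu'.ne']
        linarith
      · simp [hu, hr.ne']
    have := isOpen_ball.is_const_of_fderiv_eq_zero (𝕜 := ℂ) (f := f)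
      (convex_ball a r).isPreconnected (hf.mono fun x hx => (hball hx).2)
      (fun x hx => (hz x (hball hx).2).1 (hball hx).1) hy (mem_ball_self hr)
    exact hya (hi (hball hy).2 ha this)
  classical
  obtain ⟨l, hlen, p, hpU, hp0, hlp⟩ := Nat.find_spec hex
  have hmin := fun m => Nat.find_min hex (m := m)
  cases l with
  | nil => exact hlp hp0
  | cons v l =>
  have hk0 : ∀ x ∈ U, h x = 0 → dd h l x = 0 := by
    intro x hx hx0
    by_contra hne
    exact hmin l.length (by rw [← hlen]; simp) ⟨l, rfl, x, hx, hx0, hne⟩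
  set k := dd h l with hk
  have hkd : DifferentiableOn ℂ k U := dd_hol hU hh l
  have hkp : k p = 0 := hk0 p hpU hp0
  have hkne : fderiv ℂ k p ≠ 0 := by
    intro h0
    apply hlp
    change fderiv ℂ k p v = 0
    rw [h0]; rfl
  have hkfd := (hkd.differentiableAt (hU.mem_nhds hpU)).hasFDerivAt
  obtain ⟨k', hk'⟩ : ∃ k', k' = fderiv ℂ k p := ⟨_, rfl⟩
  rw [← hk'] at hkfd hkne
  obtain ⟨Ψ, L, hΨc, hΨp, hΨ, -⟩ := straighten (hol_contDiffAt hU hkd hpU) hkfd hkne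
  rw [hkp] at hΨc hΨp hΨ
  have hΨd : ∀ᶠ q in 𝓝 ((0 : ℂ), (0 : k'.ker)), DifferentiableAt ℂ Ψ q := by
    filter_upwards [hΨc.eventually (by simp)] with q hq using hq.differentiableAt one_ne_zero
  have hΨU : ∀ᶠ q in 𝓝 ((0 : ℂ), (0 : k'.ker)), Ψ q ∈ U :=
    hΨc.continuousAt.eventually (by rw [hΨp]; exact hU.mem_nhds hpU)
  have hmax : ∀ᶠ w in 𝓝 (0 : k'.ker), h (Ψ (0, w)) = 0 := by
    refine max_lem (H := fun q => h (Ψ q)) ?_ (by simp only [hΨp, hp0])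
    filter_upwards [hΨd, hΨU, hΨ] with q h1 h2 h3
    have hhd : DifferentiableAt ℂ h (Ψ q) := hh.differentiableAt (hU.mem_nhds h2)
    have hcd : DifferentiableAt ℂ (fun q => h (Ψ q)) q := hhd.comp q h1
    refine ⟨hcd.continuousAt, ?_, ?_⟩
    · have h4 : DifferentiableAt ℂ (fun ζ : ℂ => (ζ, q.2)) q.1 := by fun_prop
      exact DifferentiableAt.comp (f := fun ζ : ℂ => (ζ, q.2)) (g := fun q => h (Ψ q)) q.1 hcd h4
    · intro h5
      rw [← h3.1]
      exact hk0 _ h2 h5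
  have htend : Tendsto (fun w : k'.ker => ((0 : ℂ), w)) (𝓝 0) (𝓝 ((0 : ℂ), (0 : k'.ker))) :=
    (Continuous.prodMk_right (0 : ℂ)).tendsto 0
  have hall := hmax.and ((htend.eventually hΨd).and ((htend.eventually hΨU).and
    (htend.eventually hΨ)))
  obtain ⟨r, hr, hball⟩ := Metric.mem_nhds_iff.1 hall
  have hKr : 0 < Module.finrank ℂ k'.ker := by
    have h1 := LinearMap.finrank_range_add_finrank_ker (k' : E →ₗ[ℂ] ℂ)
    have h2 : Module.finrank ℂ (LinearMap.range (k' : E →ₗ[ℂ] ℂ)) ≤ 1 := by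
      simpa using Submodule.finrank_le (LinearMap.range (k' : E →ₗ[ℂ] ℂ))
    change 0 < Module.finrank ℂ (LinearMap.ker (k' : E →ₗ[ℂ] ℂ))
    omega
  have hntK : Nontrivial k'.ker := Module.nontrivial_of_finrank_pos hKr
  obtain ⟨y, hy, hya⟩ : ∃ y ∈ ball (0 : k'.ker) r, y ≠ 0 := by
    obtain ⟨u, hu⟩ := exists_ne (0 : k'.ker)
    have hu' : 0 < ‖u‖ := norm_pos_iff.2 hu
    refine ⟨((r / 2 / ‖u‖ : ℝ) : ℂ) • u, ?_, ?_⟩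
    · rw [mem_ball_zero_iff, norm_smul, Complex.norm_real,
        Real.norm_eq_abs, abs_of_pos (by positivity), div_mul_cancel₀ _ hu'.ne']
      linarith
    · simp [hu, hr.ne']
  have hder : ∀ w ∈ ball (0 : k'.ker) r, HasFDerivAt (fun w : k'.ker => f (Ψ (0, w))) (0 : k'.ker →L[ℂ] F) w := by
    intro w hw
    obtain ⟨h1, h2, h3, h4⟩ := hball hw
    have e1 := (hf.differentiableAt (hU.mem_nhds h3)).hasFDerivAt
    rw [(hz _ h3).1 h1] at e1
    have e2 : DifferentiableAt ℂ (fun w : k'.ker => Ψ (0, w)) w :=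
      DifferentiableAt.comp (f := fun w : k'.ker => ((0 : ℂ), w)) (g := Ψ) w h2 (by fun_prop)
    have e3 := HasFDerivAt.comp (f := fun w : k'.ker => Ψ (0, w)) (g := f) w e1 e2.hasFDerivAt
    rw [ContinuousLinearMap.zero_comp] at e3
    exact e3
  have hconst := isOpen_ball.is_const_of_fderiv_eq_zero (𝕜 := ℂ)
      (f := fun w : k'.ker => f (Ψ (0, w)))
      (convex_ball (0 : k'.ker) r).isPreconnected
      (fun w hw => (hder w hw).differentiableAt.differentiableWithinAt)
      (fun w hw => (hder w hw).fderiv) hy (mem_ball_self hr)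
  have hb0 := hball (mem_ball_self hr)
  have hby := hball hy
  have hΨe := hi hby.2.2.1 hb0.2.2.1 hconst
  apply hya
  have h1 := hby.2.2.2.2
  have h2 := hb0.2.2.2.2
  rw [hΨe] at h1
  exact h1.symm.trans h2

theorem osgood (n : ℕ) : ∀ (E F : Type) [NormedAddCommGroup E] [NormedSpace ℂ E]
    [FiniteDimensional ℂ E] [NormedAddCommGroup F] [NormedSpace ℂ F] [FiniteDimensional ℂ F]
    (_ : Module.finrank ℂ E = n) (_ : Module.finrank ℂ F = n) (U : Set E) (f : E → F)
    (_ : IsOpen U) (_ : DifferentiableOn ℂ f U) (_ : InjOn f U), ∀ a ∈ U, ∀ v,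
    fderiv ℂ f a v = 0 → v = 0 := by
  induction n with
  | zero =>
    intro E F _ _ _ _ _ _ hE hF U f hU hf hi a ha v hv
    have := Module.finrank_zero_iff.1 hE
    exact Subsingleton.elim _ _
  | succ n ih =>
    intro E F _ _ _ _ _ _ hE hF U f hU hf hi
    have step1 : ∀ a ∈ U, fderiv ℂ f a ≠ 0 → ∀ v, fderiv ℂ f a v = 0 → v = 0 := by
      intro a ha hne v hv
      obtain ⟨u, hu⟩ : ∃ u, fderiv ℂ f a u ≠ 0 := by
        by_contra! h; exact hne (ContinuousLinearMap.ext h)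
      obtain ⟨lam, hlam⟩ := SeparatingDual.exists_ne_zero (R := ℂ) hu
      have hfa := (hf.differentiableAt (hU.mem_nhds ha)).hasFDerivAt
      have hφ' : HasFDerivAt (fun x => lam (f x)) (lam.comp (fderiv ℂ f a)) a :=
        lam.hasFDerivAt.comp a hfa
      have hφ : ContDiffAt ℂ 1 (fun x => lam (f x)) a :=
        lam.contDiff.contDiffAt.comp a (hol_contDiffAt hU hf ha)
      have hφ0 : lam.comp (fderiv ℂ f a) ≠ 0 := by
        intro h
        exact hlam (DFunLike.congr_fun h u)
      have hlam0 : lam ≠ 0 := by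
        rintro rfl; exact hlam rfl
      obtain ⟨φ', hφ'd⟩ : ∃ φ', φ' = lam.comp (fderiv ℂ f a) := ⟨_, rfl⟩
      rw [← hφ'd] at hφ' hφ0
      obtain ⟨Ψ, L, hΨc, hΨp, hΨ, hΨ'⟩ := straighten hφ hφ' hφ0
      have hrank : ∀ (G : Type) [NormedAddCommGroup G] [NormedSpace ℂ G] [FiniteDimensional ℂ G]
          (μ : G →L[ℂ] ℂ), μ ≠ 0 → Module.finrank ℂ G = n + 1 → Module.finrank ℂ μ.ker = n := by
        intro G _ _ _ μ hμ hG
        have h1 := LinearMap.finrank_range_add_finrank_ker (μ : G →ₗ[ℂ] ℂ)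
        have h2 : LinearMap.range (μ : G →ₗ[ℂ] ℂ) = ⊤ := by
          rw [LinearMap.range_eq_top]
          apply LinearMap.surjective
          intro h
          exact hμ (ContinuousLinearMap.ext fun x => DFunLike.congr_fun h x)
        rw [h2] at h1
        simp at h1
        change Module.finrank ℂ (LinearMap.ker (μ : G →ₗ[ℂ] ℂ)) = n
        omega
      obtain ⟨P, hP⟩ := Submodule.ClosedComplemented.of_finiteDimensional lam.ker
      set c := lam (f a) with hc
      let G : φ'.ker → lam.ker := fun w => P (f (Ψ (c, w)) - f a)
      have htend : Tendsto (fun w : φ'.ker => (c, w)) (𝓝 0) (𝓝 (c, (0 : φ'.ker))) :=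
        (Continuous.prodMk_right c).tendsto 0
      have hΨd : ∀ᶠ q in 𝓝 (c, (0 : φ'.ker)), DifferentiableAt ℂ Ψ q := by
        filter_upwards [hΨc.eventually (by simp)] with q hq using hq.differentiableAt one_ne_zero
      have hΨU : ∀ᶠ q in 𝓝 (c, (0 : φ'.ker)), Ψ q ∈ U :=
        hΨc.continuousAt.eventually (by rw [hΨp]; exact hU.mem_nhds ha)
      have hall := (htend.eventually hΨd).and ((htend.eventually hΨU).and (htend.eventually hΨ))
      obtain ⟨V, hV, hVo, hV0⟩ := _root_.mem_nhds_iff.1 hall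
      have hGv : ∀ w ∈ V, ((G w : lam.ker) : F) = f (Ψ (c, w)) - f a := by
        intro w hw
        obtain ⟨h2, h3, h4, h5⟩ := hV hw
        have hm : f (Ψ (c, w)) - f a ∈ lam.ker := by
          change lam _ = 0
          rw [map_sub]
          simp only at h4
          rw [h4, sub_self]
        exact congrArg Subtype.val (hP ⟨_, hm⟩)
      have hfd0 := ih φ'.ker lam.ker (hrank E φ' hφ0 hE) (hrank F lam hlam0 hF) V G hVo ?_ ?_ 0 hV0
      · have hv' : v ∈ φ'.ker := by
          change φ' v = 0
          rw [hφ'd]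
          change lam (fderiv ℂ f a v) = 0
          rw [hv, map_zero]
        have hGd : HasFDerivAt G (P.comp ((fderiv ℂ f a).comp φ'.ker.subtypeL)) 0 := by
          have hfa' : HasFDerivAt f (fderiv ℂ f a) (Ψ (c, 0)) := by rw [hΨp]; exact hfa
          have e1 := HasFDerivAt.comp (f := fun w : φ'.ker => Ψ (c, w)) (g := f) 0 hfa' hΨ'
          exact P.hasFDerivAt.comp 0 (e1.sub_const (f a))
        have := hfd0 ⟨v, hv'⟩ (by
          rw [hGd.fderiv]
          change P (fderiv ℂ f a v) = 0
          rw [hv, map_zero])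
        exact congrArg Subtype.val this
      · intro w hw
        obtain ⟨h2, h3, h4, h5⟩ := hV hw
        have e1 : DifferentiableAt ℂ (fun w : φ'.ker => Ψ (c, w)) w :=
          DifferentiableAt.comp (f := fun w : φ'.ker => (c, w)) (g := Ψ) w h2 (by fun_prop)
        have e2 := DifferentiableAt.comp (f := fun w : φ'.ker => Ψ (c, w)) (g := f) w
          (hf.differentiableAt (hU.mem_nhds h3)) e1
        exact (P.differentiableAt.comp w (e2.sub_const (f a))).differentiableWithinAt
      · intro w hw w' hw' hww
        have e1 := hGv w hw
        rw [hww, hGv w' hw'] at e1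
        have e2 := sub_left_injective e1
        have e3 := hi (hV hw').2.1 (hV hw).2.1 e2
        have h1 := (hV hw').2.2.2
        have h2 := (hV hw).2.2.2
        rw [e3] at h1
        exact h2.symm.trans h1
    intro a ha
    refine step1 a ha ?_
    rcases Nat.eq_zero_or_pos n with rfl | hn
    · exact osgood_one hE hF hU hf hi ha
    · let e : F ≃L[ℂ] E := ContinuousLinearEquiv.ofFinrankEq (by rw [hE, hF])
      let b := Module.finBasis ℂ E
      let M : E → E →ₗ[ℂ] E := fun x => ((e : F →L[ℂ] E).comp (fderiv ℂ f x) : E →L[ℂ] E)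
      refine zset (h := fun x => LinearMap.det (M x)) (by omega) hU hf hi ?_ ?_ ha
      · have : (fun x => LinearMap.det (M x)) = fun x =>
            Matrix.det (LinearMap.toMatrix b b (M x)) := by
          ext x; rw [LinearMap.det_toMatrix]
        rw [this]
        simp only [Matrix.det_apply]
        refine DifferentiableOn.fun_sum fun σ _ => DifferentiableOn.const_smul ?_ _
        refine diffOn_prod _ fun i => ?_
        simp only [LinearMap.toMatrix_apply]
        let ℓ : F →ₗ[ℂ] ℂ := (b.coord (σ i)).comp (e : F →ₗ[ℂ] E)
        exact (ℓ.toContinuousLinearMap.differentiable).comp_differentiableOn (hol_dir hU hf (b i))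
      · intro x hx
        constructor
        · intro h0
          by_contra hne
          have hk := LinearMap.bot_lt_ker_of_det_eq_zero h0
          obtain ⟨v, hv, hv0⟩ := Submodule.exists_mem_ne_zero_of_ne_bot hk.ne'
          refine hv0 (step1 x hx hne v (e.injective ?_))
          rw [map_zero]
          exact hv
        · intro h0
          have : M x = 0 := by
            simp only [M, h0]; ext; simp
          change LinearMap.det (M x) = 0
          rw [this, LinearMap.det_zero, hE]
          simp

theorem omega_sub {E : Type*} [NormedAddCommGroup E] [NormedSpace ℂ E] {Ω : Set E}
    (hΩo : IsOpen Ω) : Ω ⊆ sub' Ω 1 := by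
  intro y hy
  have hc : ContinuousAt (fun t : ℝ => (t : ℂ)⁻¹ • y) 1 := by
    refine ContinuousAt.smul (ContinuousAt.inv₀ ?_ (by simp)) continuousAt_const
    exact Complex.continuous_ofReal.continuousAt
  have h1 : ∀ᶠ t : ℝ in 𝓝 1, (t : ℂ)⁻¹ • y ∈ Ω := hc.eventually (by simpa using hΩo.mem_nhds hy)
  have h2 : ∀ᶠ t : ℝ in 𝓝[<] 1, ((t : ℂ)⁻¹ • y ∈ Ω ∧ 0 < t) ∧ t < 1 :=
    ((h1.and (lt_mem_nhds one_pos)).filter_mono nhdsWithin_le_nhds).and self_mem_nhdsWithin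
  obtain ⟨t, ⟨ht, ht0⟩, ht1⟩ := h2.exists
  have hb : BddBelow {t : ℝ | 0 < t ∧ (t : ℂ)⁻¹ • y ∈ Ω} := ⟨0, fun s hs => hs.1.le⟩
  exact (csInf_le hb ⟨ht0, ht⟩).trans_lt ht1

/-- If the generalized squeezing function equals `1` at some point, witnessed by an
extremal map `f`, then `f` is a biholomorphism of `D` onto `Ω`. -/
theorem stmt14 {n : ℕ} (D Ω : Set (Fin n → ℂ))
    (hDo : IsOpen D) (hDc : IsConnected D) (hDb : IsBounded D)
    (hΩo : IsOpen Ω) (hΩc : IsConnected Ω) (hΩb : IsBounded Ω)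
    (hΩcv : Convex ℝ Ω) (hΩbal : Bal Ω)
    (z : Fin n → ℂ) (hz : z ∈ D) (f : (Fin n → ℂ) → (Fin n → ℂ))
    (hf : DifferentiableOn ℂ f D) (hfi : Set.InjOn f D) (hfm : Set.MapsTo f D Ω)
    (hfz : f z = 0) (hext : sub' Ω (gsq D Ω z) ⊆ f '' D)
    (h1 : gsq D Ω z = 1) :
    Set.BijOn f D Ω ∧ ∃ g : (Fin n → ℂ) → (Fin n → ℂ),
      DifferentiableOn ℂ g Ω ∧ Set.InvOn g f D Ω := by
  rw [h1] at hext
  have hsurj : SurjOn f D Ω := (omega_sub hΩo).trans hext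
  have hbij : BijOn f D Ω := ⟨hfm, hfi, hsurj⟩
  have hinv := hbij.invOn_invFunOn
  refine ⟨hbij, Function.invFunOn f D, ?_, hinv⟩
  have hgm : MapsTo (Function.invFunOn f D) Ω D := hsurj.mapsTo_invFunOn
  intro y hy
  apply DifferentiableAt.differentiableWithinAt
  obtain ⟨x, hx, rfl⟩ := hsurj hy
  have hinj := osgood n _ _ (by simp) (by simp) D f hDo hf hfi x hx
  let e : (Fin n → ℂ) ≃L[ℂ] (Fin n → ℂ) :=
    (LinearEquiv.ofInjectiveEndo (fderiv ℂ f x : (Fin n → ℂ) →ₗ[ℂ] (Fin n → ℂ))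
      ((injective_iff_map_eq_zero _).2 hinj)).toContinuousLinearEquiv
  have he : (e : (Fin n → ℂ) →L[ℂ] (Fin n → ℂ)) = fderiv ℂ f x := by
    apply ContinuousLinearMap.ext; intro v; rfl
  have hd : HasFDerivAt f (e : (Fin n → ℂ) →L[ℂ] (Fin n → ℂ)) x := by
    rw [he]; exact (hf.differentiableAt (hDo.mem_nhds hx)).hasFDerivAt
  have hst := (hol_contDiffAt hDo hf hx).hasStrictFDerivAt' hd one_ne_zero
  have hl := hst.to_localInverse.hasFDerivAt.differentiableAt
  refine hl.congr_of_eventuallyEq ?_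
  have hmem : ∀ᶠ y in 𝓝 (f x), hst.localInverse f e x y ∈ D :=
    hst.localInverse_tendsto.eventually (hDo.mem_nhds hx)
  filter_upwards [hst.eventually_right_inverse, hmem, hΩo.mem_nhds hy] with y' h2 h3 h4
  exact hfi (hgm h4) h3 ((hinv.2 h4).trans h2.symm)
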